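/- Let a, b, c, d, p be real constants, P(x) = (x−a)(x−b)(x−c)(x−d), and let U ⊆ ℝ³ be a nonempty open set on which λ¹ > λ² > λ³ > 0, 1 + p√(λ¹λ²λ³) > 0, and on which the functions H₁² = (1+p√(λ¹λ²λ³))⁻²(λ¹−λ²)(λ¹−λ³)/P(λ¹), H₂² = (1+p√(λ¹λ²λ³))⁻²(λ²−λ¹)(λ²−λ³)/P(λ²), H₃² = (1+p√(λ¹λ²λ³))⁻²(λ³−λ¹)(λ³−λ²)/P(λ³) are positive, with Hᵢ denoting their positive square roots. Then: (1) the off-diagonal Lamé equations ∂ⱼ∂ₖHᵢ − Hⱼ⁻¹(∂ⱼHᵢ)(∂ₖHⱼ) − Hₖ⁻¹(∂ₖHᵢ)(∂ⱼHₖ) = 0 hold on U for every permutation (i,j,k) of (1,2,3); and (2) the diagonal Lamé equations ∂ᵢ(Hᵢ⁻¹∂ᵢHⱼ) + ∂ⱼ(Hⱼ⁻¹∂ⱼHᵢ) + Hₖ⁻²(∂ₖHᵢ)(∂ₖHⱼ) = 0 hold on U for every permutation (i,j,k) of (1,2,3) if and only if p·abcd = 0 and p²(abc + abd + acd + bcd)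 = 1. -/

import Mathlib

/-- The partial derivative of `f : ℝ³ → ℝ` in the `i`-th coordinate direction,
taken as a line (directional) derivative. -/
noncomputable def pd (i : Fin 3) (f : (Fin 3 → ℝ) → ℝ) (x : Fin 3 → ℝ) : ℝ :=
  lineDeriv ℝ f x (Pi.single i 1)

/-!
Each `Hᵢ` is a product of powers of `W`, `P(λⁱ)` and the differences `λⁱ - λʲ`, so its logarithmic
derivatives are elementary. With `q = 1 - 1/W` they are `∂ⱼHᵢ = gᵢⱼHᵢ` where
`2gᵢⱼ = 1/(λʲ - λⁱ) - q/λʲ` for `i ≠ j`, and `∂ⱼq = q(1 - q)/(2λʲ)`. The off-diagonal equations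
thereby become a rational identity in `λ` and `q`.

The left side of a diagonal equation is `HᵢHⱼ` times an expression linear in the quartic `P`.
The monomials `x²` and `x³` contribute nothing to it, `x⁴` and `x` contribute the constants `1/4`
and `p²/4`, and the contribution of `1` is `p` times a function which is not symmetric in `i, j, k`.
Comparing two permutations thus separates the constant coefficient of `P` from the others.
-/

section LogarithmicDerivative

variable {E : Type*} [AddCommGroup E] [Module ℝ E] {f h : E → ℝ} {f' r s : ℝ} {x v : E}

/-- The logarithmic derivative of `f` at `x` in the direction `v` is `r`. It is stated without
division, as `∂ᵥf = r f`, and hence says that `∂ᵥf = 0` where `f` vanishes. -/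
def HasLogLineDerivAt (f : E → ℝ) (r : ℝ) (x v : E) : Prop :=
  HasLineDerivAt ℝ f (r * f x) x v

lemma hasLogLineDerivAt_of_hasLineDerivAt (hf : HasLineDerivAt ℝ f f' x v) (hx : f x ≠ 0) :
    HasLogLineDerivAt f (f' / f x) x v := by
  rwa [HasLogLineDerivAt, div_mul_cancel₀ _ hx]

lemma hasLogLineDerivAt_const (c : ℝ) (x v : E) : HasLogLineDerivAt (fun _ ↦ c) 0 x v :=
  (hasDerivAt_const (0 : ℝ) c).congr_deriv (zero_mul c).symm

namespace HasLogLineDerivAt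

lemma mul (hf : HasLogLineDerivAt f r x v) (hh : HasLogLineDerivAt h s x v) :
    HasLogLineDerivAt (fun y ↦ f y * h y) (r + s) x v := by
  refine (HasDerivAt.mul hf hh).congr_deriv ?_
  simp only [zero_smul, add_zero]
  ring

lemma inv (hf : HasLogLineDerivAt f r x v) (hx : f x ≠ 0) :
    HasLogLineDerivAt (fun y ↦ (f y)⁻¹) (-r) x v := by
  refine (HasDerivAt.fun_inv hf (by simpa using hx)).congr_deriv ?_
  simp only [zero_smul, add_zero]
  field_simp

lemma sqrt (hf : HasLogLineDerivAt f r x v) (hx : 0 < f x) :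
    HasLogLineDerivAt (fun y ↦ √(f y)) (r / 2) x v := by
  refine (HasDerivAt.sqrt hf (by simpa using hx.ne')).congr_deriv ?_
  simp only [zero_smul, add_zero]
  have hsqrt : √(f x) ≠ 0 := (Real.sqrt_pos.2 hx).ne'
  field_simp
  rw [Real.sq_sqrt hx.le]

lemma prod {ι : Type*} {F : ι → E → ℝ} {R : ι → ℝ} (t : Finset ι)
    (hF : ∀ i ∈ t, HasLogLineDerivAt (F i) (R i) x v) :
    HasLogLineDerivAt (fun y ↦ ∏ i ∈ t, F i y) (∑ i ∈ t, R i) x v := by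
  induction t using Finset.cons_induction with
  | empty => simpa using hasLogLineDerivAt_const 1 x v
  | cons i t hi ih =>
    simp only [Finset.prod_cons, Finset.sum_cons]
    exact (hF i (by simp)).mul (ih fun j hj ↦ hF j (by simp [hj]))

end HasLogLineDerivAt

lemma hasLineDerivAt_apply {ι : Type*} (i : ι) (l v : ι → ℝ) :
    HasLineDerivAt ℝ (fun w : ι → ℝ ↦ w i) (v i) l v := by
  simpa [HasLineDerivAt] using ((hasDerivAt_id (0 : ℝ)).mul_const (v i)).const_add (l i)

end LogarithmicDerivative

section Lame

variable {H : Fin 3 → (Fin 3 → ℝ) → ℝ} {i j k : Fin 3} {l : Fin 3 → ℝ}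

/-- The left side of the off-diagonal Lamé equation for the diagonal metric `∑ Hᵢ²(dλⁱ)²`. -/
noncomputable def offDiagonalLame (H : Fin 3 → (Fin 3 → ℝ) → ℝ) (i j k : Fin 3)
    (l : Fin 3 → ℝ) : ℝ :=
  pd j (pd k (H i)) l - (H j l)⁻¹ * pd j (H i) l * pd k (H j) l
    - (H k l)⁻¹ * pd k (H i) l * pd j (H k) l

/-- The left side of the diagonal Lamé equation for the diagonal metric `∑ Hᵢ²(dλⁱ)²`. -/
noncomputable def diagonalLame (H : Fin 3 → (Fin 3 → ℝ) → ℝ) (i j k : Fin 3)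
    (l : Fin 3 → ℝ) : ℝ :=
  pd i (fun w ↦ (H i w)⁻¹ * pd i (H j) w) l + pd j (fun w ↦ (H j w)⁻¹ * pd j (H i) w) l
    + (H k l ^ 2)⁻¹ * pd k (H i) l * pd k (H j) l

lemma HasLogLineDerivAt.pd_eq {f : (Fin 3 → ℝ) → ℝ} {r : ℝ}
    (hf : HasLogLineDerivAt f r l (Pi.single i 1)) : pd i f l = r * f l :=
  HasLineDerivAt.lineDeriv hf

lemma pd_congr {f h : (Fin 3 → ℝ) → ℝ} (hfh : f =ᶠ[nhds l] h) : pd i f l = pd i h l :=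
  hfh.lineDeriv_eq

lemma pd_pd_eq {f g : (Fin 3 → ℝ) → ℝ} {r g' : ℝ}
    (hk : ∀ᶠ w in nhds l, HasLogLineDerivAt f (g w) w (Pi.single k 1))
    (hj : HasLogLineDerivAt f r l (Pi.single j 1))
    (hg : HasLineDerivAt ℝ g g' l (Pi.single j 1)) :
    pd j (pd k f) l = (g' + r * g l) * f l := by
  rw [pd_congr (hk.mono fun w hw ↦ hw.pd_eq)]
  apply HasLineDerivAt.lineDeriv
  refine (HasDerivAt.mul hg hj).congr_deriv ?_
  simp only [zero_smul, add_zero]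
  ring

lemma pd_inv_mul_pd_eq {f h g : (Fin 3 → ℝ) → ℝ} {r g' : ℝ} (hne : f l ≠ 0)
    (hh : ∀ᶠ w in nhds l, HasLogLineDerivAt h (g w) w (Pi.single i 1))
    (hf : HasLogLineDerivAt f r l (Pi.single i 1))
    (hg : HasLineDerivAt ℝ g g' l (Pi.single i 1)) :
    pd i (fun w ↦ (f w)⁻¹ * pd i h w) l = f l * h l * ((f l ^ 2)⁻¹ * (g' + g l * (g l - r))) := by
  rw [pd_congr (hh.mono fun w hw ↦ by rw [hw.pd_eq])]
  apply HasLineDerivAt.lineDeriv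
  refine (HasDerivAt.mul (hf.inv hne) (HasDerivAt.fun_mul hg hh.self_of_nhds)).congr_deriv ?_
  simp only [zero_smul, add_zero]
  field_simp
  ring

lemma offDiagonalLame_eq_mul {g : Fin 3 → Fin 3 → (Fin 3 → ℝ) → ℝ} {g' : ℝ}
    (hij : i ≠ j) (hjk : j ≠ k) (hik : i ≠ k) (hj : H j l ≠ 0) (hk : H k l ≠ 0)
    (hH : ∀ m n, m ≠ n → ∀ᶠ w in nhds l, HasLogLineDerivAt (H m) (g m n w) w (Pi.single n 1))
    (hg : HasLineDerivAt ℝ (g i k) g' l (Pi.single j 1)) :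
    offDiagonalLame H i j k l =
      H i l * (g' + g i j l * g i k l - g i j l * g j k l - g i k l * g k j l) := by
  have hpd (m n) (hmn : m ≠ n) : pd n (H m) l = g m n l * H m l :=
    (hH m n hmn).self_of_nhds.pd_eq
  rw [offDiagonalLame, pd_pd_eq (hH i k hik) (hH i j hij).self_of_nhds hg, hpd i j hij,
    hpd j k hjk, hpd i k hik, hpd k j hjk.symm]
  field_simp

end Lame

section CyclidicMetric

variable {P : ℝ → ℝ} {p : ℝ} {i j k : Fin 3} {l : Fin 3 → ℝ}

/-- The function `W = 1 + p√(λ¹λ²λ³)`, whose inverse is the conformal factor of the metric. -/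
noncomputable def cyclidicW (p : ℝ) (l : Fin 3 → ℝ) : ℝ :=
  1 + p * √(∏ i, l i)

/-- The squared Lamé coefficients `Hᵢ² = W⁻² ∏_{j≠i}(λⁱ-λʲ)/P(λⁱ)` of the cyclidic metric, for an
arbitrary function `P`. -/
noncomputable def cyclidicSq (P : ℝ → ℝ) (p : ℝ) (i : Fin 3) (l : Fin 3 → ℝ) : ℝ :=
  (cyclidicW p l ^ 2)⁻¹ * (∏ j ∈ Finset.univ.erase i, (l i - l j)) / P (l i)

/-- The Lamé coefficients `Hᵢ` of the cyclidic metric. -/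
noncomputable def cyclidicH (P : ℝ → ℝ) (p : ℝ) (i : Fin 3) (l : Fin 3 → ℝ) : ℝ :=
  √(cyclidicSq P p i l)

/-- The domain of the cyclidic metric: the square root in `W` is smooth there, and every `Hᵢ²` is
positive. By the convention `x / 0 = 0` the latter forces `W` and `P(λⁱ)` to be nonzero. -/
def cyclidicDomain (P : ℝ → ℝ) (p : ℝ) : Set (Fin 3 → ℝ) :=
  {l | 0 < ∏ i, l i ∧ ∀ i, 0 < cyclidicSq P p i l}

/-- The quantity `q = 1 - 1/W` through which `W` enters the derivatives of the metric; it satisfies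
`∂ⱼ log W = q/(2λʲ)`. -/
noncomputable def cyclidicQ (p : ℝ) (l : Fin 3 → ℝ) : ℝ :=
  1 - (cyclidicW p l)⁻¹

/-- The logarithmic derivative `gᵢⱼ = ∂ⱼ log Hᵢ` of the cyclidic metric for `i ≠ j`; it does not
depend on `P`. -/
noncomputable def cyclidicG (p : ℝ) (i j : Fin 3) (l : Fin 3 → ℝ) : ℝ :=
  (1 / (l j - l i) - cyclidicQ p l / l j) / 2

lemma univ_erase_eq_pair (hij : i ≠ j) (hjk : j ≠ k) (hik : i ≠ k) :
    Finset.univ.erase i = {j, k} := by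
  decide +revert

lemma prod_univ_eq_mul_mul (hij : i ≠ j) (hjk : j ≠ k) (hik : i ≠ k) (l : Fin 3 → ℝ) :
    ∏ m, l m = l i * l j * l k := by
  rw [← Finset.mul_prod_erase _ _ (Finset.mem_univ i), univ_erase_eq_pair hij hjk hik,
    Finset.prod_pair hjk, mul_assoc]

lemma cyclidicW_ne_zero (hl : l ∈ cyclidicDomain P p) : cyclidicW p l ≠ 0 := fun h ↦ by
  simpa [cyclidicSq, h] using hl.2 0

lemma apply_ne_zero_of_mem_cyclidicDomain (hl : l ∈ cyclidicDomain P p) (i : Fin 3) :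
    l i ≠ 0 :=
  Finset.prod_ne_zero_iff.1 hl.1.ne' i (Finset.mem_univ i)

lemma sub_ne_zero_of_mem_cyclidicDomain (hl : l ∈ cyclidicDomain P p) (hij : i ≠ j) :
    l i - l j ≠ 0 := fun h ↦ by
  have hprod : ∏ m ∈ Finset.univ.erase i, (l i - l m) = 0 :=
    Finset.prod_eq_zero (by simp [hij.symm]) h
  simpa [cyclidicSq, hprod] using hl.2 i

lemma eval_ne_zero_of_mem_cyclidicDomain (hl : l ∈ cyclidicDomain P p) (i : Fin 3) :
    P (l i) ≠ 0 := fun h ↦ by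
  simpa [cyclidicSq, h] using hl.2 i

lemma cyclidicH_pos (hl : l ∈ cyclidicDomain P p) (i : Fin 3) : 0 < cyclidicH P p i l :=
  Real.sqrt_pos.2 (hl.2 i)

lemma inv_cyclidicH_sq (hl : l ∈ cyclidicDomain P p) (hij : i ≠ j) (hjk : j ≠ k) (hik : i ≠ k) :
    (cyclidicH P p i l ^ 2)⁻¹ =
      cyclidicW p l ^ 2 * P (l i) / ((l i - l j) * (l i - l k)) := by
  rw [cyclidicH, Real.sq_sqrt (hl.2 i).le, cyclidicSq, univ_erase_eq_pair hij hjk hik,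
    Finset.prod_pair hjk, inv_div, div_mul_eq_div_div, div_inv_eq_mul]
  ring

lemma hasLineDerivAt_cyclidicW (hl : 0 < ∏ i, l i) (p : ℝ) (j : Fin 3) :
    HasLineDerivAt ℝ (cyclidicW p) ((cyclidicW p l - 1) / (2 * l j)) l (Pi.single j 1) := by
  have hlog (i : Fin 3) : HasLogLineDerivAt (fun w : Fin 3 → ℝ ↦ w i)
      ((Pi.single j 1 : Fin 3 → ℝ) i / l i) l (Pi.single j 1) :=
    hasLogLineDerivAt_of_hasLineDerivAt (hasLineDerivAt_apply i l _)
      (Finset.prod_ne_zero_iff.1 hl.ne' i (Finset.mem_univ i))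
  have hsqrt := (HasLogLineDerivAt.prod Finset.univ fun i _ ↦ hlog i).sqrt hl
  refine ((HasDerivAt.const_mul p hsqrt).const_add 1).congr_deriv ?_
  simp only [Pi.single_apply, ite_div, zero_div, Finset.sum_ite_eq', Finset.mem_univ, if_true,
    cyclidicW]
  ring

lemma hasLogLineDerivAt_cyclidicW (hl : l ∈ cyclidicDomain P p) (j : Fin 3) :
    HasLogLineDerivAt (cyclidicW p) (cyclidicQ p l / (2 * l j)) l (Pi.single j 1) := by
  have hW := cyclidicW_ne_zero hl
  refine (hasLineDerivAt_cyclidicW hl.1 p j).congr_deriv ?_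
  rw [cyclidicQ]
  field_simp

lemma cyclidicW_mul_cyclidicQ (hl : l ∈ cyclidicDomain P p) :
    cyclidicW p l * cyclidicQ p l = p * √(∏ i, l i) := by
  rw [cyclidicQ, mul_sub, mul_inv_cancel₀ (cyclidicW_ne_zero hl), mul_one, cyclidicW,
    add_sub_cancel_left]

lemma hasLineDerivAt_cyclidicQ (hl : l ∈ cyclidicDomain P p) (j : Fin 3) :
    HasLineDerivAt ℝ (cyclidicQ p) (cyclidicQ p l * (1 - cyclidicQ p l) / (2 * l j)) l
      (Pi.single j 1) := by
  refine (HasDerivAt.const_sub 1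
    ((hasLogLineDerivAt_cyclidicW hl j).inv (cyclidicW_ne_zero hl))).congr_deriv ?_
  simp only [cyclidicQ]
  ring

lemma hasLogLineDerivAt_cyclidicH {r : ℝ} (hl : l ∈ cyclidicDomain P p)
    (hP : HasLogLineDerivAt (fun w : Fin 3 → ℝ ↦ P (w i)) r l (Pi.single j 1)) :
    HasLogLineDerivAt (cyclidicH P p i)
      ((∑ m ∈ Finset.univ.erase i,
          ((Pi.single j 1 : Fin 3 → ℝ) i - (Pi.single j 1 : Fin 3 → ℝ) m) / (l i - l m)
        - r - cyclidicQ p l / l j) / 2) l (Pi.single j 1) := by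
  have hdiff (m) (hm : m ∈ Finset.univ.erase i) :
      HasLogLineDerivAt (fun w : Fin 3 → ℝ ↦ w i - w m)
        (((Pi.single j 1 : Fin 3 → ℝ) i - (Pi.single j 1 : Fin 3 → ℝ) m) / (l i - l m)) l
        (Pi.single j 1) :=
    hasLogLineDerivAt_of_hasLineDerivAt
      (HasDerivAt.sub (hasLineDerivAt_apply i l _) (hasLineDerivAt_apply m l _))
      (sub_ne_zero_of_mem_cyclidicDomain hl (Finset.ne_of_mem_erase hm).symm)
  have hW := hasLogLineDerivAt_cyclidicW hl j
  have hWinv := (hW.mul hW).inv (mul_self_ne_zero.2 (cyclidicW_ne_zero hl))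
  have hsq := (hWinv.mul (HasLogLineDerivAt.prod _ hdiff)).mul
    (hP.inv (eval_ne_zero_of_mem_cyclidicDomain hl i))
  simp only [← pow_two, ← div_eq_mul_inv] at hsq
  convert hsq.sqrt (hl.2 i) using 1
  · rfl
  · ring

lemma hasLogLineDerivAt_cyclidicH_of_ne (hl : l ∈ cyclidicDomain P p) (hij : i ≠ j) :
    HasLogLineDerivAt (cyclidicH P p i) (cyclidicG p i j l) l (Pi.single j 1) := by
  have hP : HasLogLineDerivAt (fun w : Fin 3 → ℝ ↦ P (w i)) 0 l (Pi.single j 1) := by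
    simpa [HasLogLineDerivAt, HasLineDerivAt, hij] using hasDerivAt_const (0 : ℝ) (P (l i))
  convert hasLogLineDerivAt_cyclidicH hl hP using 1
  have hsum : ∑ m ∈ Finset.univ.erase i,
      ((Pi.single j 1 : Fin 3 → ℝ) i - (Pi.single j 1 : Fin 3 → ℝ) m) / (l i - l m)
        = 1 / (l j - l i) := by
    rw [Finset.sum_eq_single_of_mem j (by simp [hij.symm]) fun m _ hm ↦ by simp [hij, hm]]
    simp only [Pi.single_eq_same, Pi.single_eq_of_ne hij, zero_sub, neg_div, ← div_neg, neg_sub]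
  rw [hsum, sub_zero, cyclidicG]

lemma hasLogLineDerivAt_cyclidicH_self {P' : ℝ} (hl : l ∈ cyclidicDomain P p)
    (hP : HasDerivAt P P' (l i)) (hij : i ≠ j) (hjk : j ≠ k) (hik : i ≠ k) :
    HasLogLineDerivAt (cyclidicH P p i)
      ((1 / (l i - l j) + 1 / (l i - l k) - P' / P (l i) - cyclidicQ p l / l i) / 2) l
      (Pi.single i 1) := by
  have hPi : HasLineDerivAt ℝ (fun w : Fin 3 → ℝ ↦ P (w i)) P' l (Pi.single i 1) := by
    have hcomp := HasDerivAt.comp_of_eq 0 hP (hasLineDerivAt_apply i l (Pi.single i 1))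
      (by simp)
    rwa [Pi.single_eq_same, mul_one] at hcomp
  convert hasLogLineDerivAt_cyclidicH hl
    (hasLogLineDerivAt_of_hasLineDerivAt hPi (eval_ne_zero_of_mem_cyclidicDomain hl i)) using 1
  simp [univ_erase_eq_pair hij hjk hik, Finset.sum_pair hjk, hij.symm, hik.symm]

lemma hasLineDerivAt_cyclidicG (hl : l ∈ cyclidicDomain P p) (hij : i ≠ j) (hjk : j ≠ k) :
    HasLineDerivAt ℝ (cyclidicG p i k)
      (-(cyclidicQ p l * (1 - cyclidicQ p l)) / (4 * l j * l k)) l (Pi.single j 1) := by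
  have hQ := hasLineDerivAt_cyclidicQ hl j
  have hG := ((HasDerivAt.div_const hQ (l k)).const_sub (1 / (l k - l i))).div_const 2
  simp only [HasLineDerivAt, cyclidicG, Pi.add_apply, Pi.smul_apply, Pi.single_eq_of_ne hij,
    Pi.single_eq_of_ne hjk.symm, smul_zero, add_zero]
  refine hG.congr_deriv ?_
  ring

lemma hasLineDerivAt_cyclidicG_self (hl : l ∈ cyclidicDomain P p) (hij : i ≠ j) :
    HasLineDerivAt ℝ (cyclidicG p j i)
      ((-1 / (l i - l j) ^ 2 + cyclidicQ p l * (1 + cyclidicQ p l) / (2 * l i ^ 2)) / 2) l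
      (Pi.single i 1) := by
  have hi := apply_ne_zero_of_mem_cyclidicDomain hl i
  have hsub := sub_ne_zero_of_mem_cyclidicDomain hl hij
  have hcoord := hasLineDerivAt_apply i l (Pi.single i 1)
  have hdiff := HasDerivAt.sub hcoord (hasLineDerivAt_apply j l (Pi.single i 1))
  have hG := ((HasDerivAt.fun_div (hasDerivAt_const 0 1) hdiff (by simpa using hsub)).sub
    (HasDerivAt.fun_div (hasLineDerivAt_cyclidicQ hl i) hcoord (by simpa using hi))).div_const 2
  refine hG.congr_deriv ?_
  simp only [Pi.sub_apply, zero_smul, add_zero, Pi.single_eq_same, Pi.single_eq_of_ne hij.symm]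
  field_simp
  ring

lemma offDiagonal_identity {x y z q : ℝ} (hy : y ≠ 0) (hz : z ≠ 0)
    (hxy : x - y ≠ 0) (hxz : x - z ≠ 0) (hyz : y - z ≠ 0) :
    -(q * (1 - q)) / (4 * y * z) + (1 / (y - x) - q / y) / 2 * ((1 / (z - x) - q / z) / 2)
      - (1 / (y - x) - q / y) / 2 * ((1 / (z - y) - q / z) / 2)
      - (1 / (z - x) - q / z) / 2 * ((1 / (y - z) - q / y) / 2) = 0 := by
  rw [← neg_sub x y, ← neg_sub x z, ← neg_sub y z]
  field_simp
  ring

theorem offDiagonalLame_cyclidicH (hl : cyclidicDomain P p ∈ nhds l)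
    (hij : i ≠ j) (hjk : j ≠ k) (hik : i ≠ k) :
    offDiagonalLame (cyclidicH P p) i j k l = 0 := by
  have hmem := mem_of_mem_nhds hl
  have hsub {m n} (hmn : m ≠ n) := sub_ne_zero_of_mem_cyclidicDomain (i := m) (j := n) hmem hmn
  have hne := apply_ne_zero_of_mem_cyclidicDomain hmem
  have hlog (m n) (hmn : m ≠ n) : ∀ᶠ w in nhds l,
      HasLogLineDerivAt (cyclidicH P p m) (cyclidicG p m n w) w (Pi.single n 1) :=
    Filter.mem_of_superset hl fun w hw ↦ hasLogLineDerivAt_cyclidicH_of_ne hw hmn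
  rw [offDiagonalLame_eq_mul hij hjk hik (cyclidicH_pos hmem j).ne' (cyclidicH_pos hmem k).ne'
    hlog (hasLineDerivAt_cyclidicG hmem hij hjk)]
  exact mul_eq_zero_of_right _
    (offDiagonal_identity (hne j) (hne k) (hsub hij) (hsub hik) (hsub hjk))

/-- The contribution of `∂ᵢ(Hᵢ⁻¹∂ᵢHⱼ)` to the diagonal Lamé equation, divided by `HᵢHⱼW²/4`. Here
`(x, y, z) = (λⁱ, λʲ, λᵏ)`, and `u`, `u'` stand for `P(x)`, `P'(x)`. -/
noncomputable def diagonalPart (x y z q u u' : ℝ) : ℝ :=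
  ((-2 / (x - y) ^ 2 + q * (1 + q) / x ^ 2 - (1 / (x - y) - q / x) / (x - z)) * u
    + (1 / (x - y) - q / x) * u') / ((x - y) * (x - z))

/-- The left side of the diagonal Lamé equation divided by `HᵢHⱼW²/4`, as a linear form in the
values of `P` and its derivative `P'` at `(x, y, z) = (λⁱ, λʲ, λᵏ)`. -/
noncomputable def diagonalForm (x y z q : ℝ) (P P' : ℝ → ℝ) : ℝ :=
  diagonalPart x y z q (P x) (P' x) + diagonalPart y x z q (P y) (P' y)
    + (1 / (z - x) - q / z) * (1 / (z - y) - q / z) * P z / ((z - x) * (z - y))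

lemma pd_inv_mul_pd_cyclidicH {P' : ℝ} (hl : cyclidicDomain P p ∈ nhds l)
    (hP : HasDerivAt P P' (l i)) (hij : i ≠ j) (hjk : j ≠ k) (hik : i ≠ k) :
    pd i (fun w ↦ (cyclidicH P p i w)⁻¹ * pd i (cyclidicH P p j) w) l =
      cyclidicH P p i l * cyclidicH P p j l * (cyclidicW p l ^ 2 / 4
        * diagonalPart (l i) (l j) (l k) (cyclidicQ p l) (P (l i)) P') := by
  have hmem := mem_of_mem_nhds hl
  have hPi := eval_ne_zero_of_mem_cyclidicDomain hmem i
  rw [pd_inv_mul_pd_eq (cyclidicH_pos hmem i).ne'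
    (Filter.mem_of_superset hl fun w hw ↦ hasLogLineDerivAt_cyclidicH_of_ne hw hij.symm)
    (hasLogLineDerivAt_cyclidicH_self hmem hP hij hjk hik)
    (hasLineDerivAt_cyclidicG_self hmem hij), inv_cyclidicH_sq hmem hij hjk hik]
  congr 1
  rw [diagonalPart, cyclidicG]
  field_simp
  ring

lemma diagonalLame_cyclidicH {P' : ℝ → ℝ} (hl : cyclidicDomain P p ∈ nhds l)
    (hP : ∀ x, HasDerivAt P (P' x) x) (hij : i ≠ j) (hjk : j ≠ k) (hik : i ≠ k) :
    diagonalLame (cyclidicH P p) i j k l = cyclidicH P p i l * cyclidicH P p j l *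
      (cyclidicW p l ^ 2 / 4 * diagonalForm (l i) (l j) (l k) (cyclidicQ p l) P P') := by
  have hmem := mem_of_mem_nhds hl
  rw [diagonalLame, pd_inv_mul_pd_cyclidicH hl (hP _) hij hjk hik,
    pd_inv_mul_pd_cyclidicH hl (hP _) hij.symm hik hjk,
    (hasLogLineDerivAt_cyclidicH_of_ne hmem hik).pd_eq,
    (hasLogLineDerivAt_cyclidicH_of_ne hmem hjk).pd_eq,
    inv_cyclidicH_sq hmem hik.symm hij hjk.symm, diagonalForm, cyclidicG, cyclidicG]
  ring

section DiagonalForm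

variable {x y z : ℝ} (hx : x ≠ 0) (hy : y ≠ 0) (hz : z ≠ 0) (hxy : x - y ≠ 0) (hxz : x - z ≠ 0)
  (hyz : y - z ≠ 0) (q : ℝ)
include hx hy hz hxy hxz hyz

lemma diagonalForm_one :
    diagonalForm x y z q (fun _ ↦ 1) (fun _ ↦ 0) =
      (q * (1 / x + 1 / y) + q ^ 2 * (1 / x + 1 / y + 1 / z)) / (x * y * z) := by
  rw [diagonalForm, diagonalPart, diagonalPart, ← neg_sub x y, ← neg_sub x z, ← neg_sub y z]
  field_simp
  ring

lemma diagonalForm_id :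
    diagonalForm x y z q (fun t ↦ t) (fun _ ↦ 1) = q ^ 2 / (x * y * z) := by
  rw [diagonalForm, diagonalPart, diagonalPart, ← neg_sub x y, ← neg_sub x z, ← neg_sub y z]
  field_simp
  ring

lemma diagonalForm_pow_two :
    diagonalForm x y z q (fun t ↦ t ^ 2) (fun t ↦ 2 * t) = 0 := by
  rw [diagonalForm, diagonalPart, diagonalPart, ← neg_sub x y, ← neg_sub x z, ← neg_sub y z]
  field_simp
  ring

lemma diagonalForm_pow_three :
    diagonalForm x y z q (fun t ↦ t ^ 3) (fun t ↦ 3 * t ^ 2) = 0 := by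
  rw [diagonalForm, diagonalPart, diagonalPart, ← neg_sub x y, ← neg_sub x z, ← neg_sub y z]
  field_simp
  ring

lemma diagonalForm_pow_four :
    diagonalForm x y z q (fun t ↦ t ^ 4) (fun t ↦ 4 * t ^ 3) = (1 - q) ^ 2 := by
  rw [diagonalForm, diagonalPart, diagonalPart, ← neg_sub x y, ← neg_sub x z, ← neg_sub y z]
  field_simp
  ring

lemma diagonalForm_quartic {e₀ e₁ e₂ e₃ e₄ : ℝ}
    (hP : ∀ t, P t = e₀ * t ^ 4 - e₁ * t ^ 3 + e₂ * t ^ 2 - e₃ * t + e₄) :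
    diagonalForm x y z q P (fun t ↦ e₀ * (4 * t ^ 3) - e₁ * (3 * t ^ 2) + e₂ * (2 * t) - e₃) =
      e₀ * (1 - q) ^ 2 - e₃ * (q ^ 2 / (x * y * z)) +
        e₄ * ((q * (1 / x + 1 / y) + q ^ 2 * (1 / x + 1 / y + 1 / z)) / (x * y * z)) := by
  have h₀ := diagonalForm_pow_four hx hy hz hxy hxz hyz q
  have h₁ := diagonalForm_pow_three hx hy hz hxy hxz hyz q
  have h₂ := diagonalForm_pow_two hx hy hz hxy hxz hyz q
  have h₃ := diagonalForm_id hx hy hz hxy hxz hyz q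
  have h₄ := diagonalForm_one hx hy hz hxy hxz hyz q
  simp only [diagonalForm, diagonalPart, hP] at h₀ h₁ h₂ h₃ h₄ ⊢
  linear_combination e₀ * h₀ - e₁ * h₁ + e₂ * h₂ - e₃ * h₃ + e₄ * h₄

end DiagonalForm

section Quartic

variable {e₀ e₁ e₂ e₃ e₄ : ℝ}
  (hP : ∀ x, P x = e₀ * x ^ 4 - e₁ * x ^ 3 + e₂ * x ^ 2 - e₃ * x + e₄)
include hP

lemma hasDerivAt_quartic (x : ℝ) :
    HasDerivAt P (e₀ * (4 * x ^ 3) - e₁ * (3 * x ^ 2) + e₂ * (2 * x) - e₃) x := by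
  rw [funext hP]
  have hpow (n : ℕ) := hasDerivAt_pow n x
  refine ((((((hpow 4).const_mul e₀).sub ((hpow 3).const_mul e₁)).add
    ((hpow 2).const_mul e₂)).sub ((hasDerivAt_id x).const_mul e₃)).add_const e₄).congr_deriv ?_
  norm_num

lemma diagonalLame_cyclidicH_quartic (hl : cyclidicDomain P p ∈ nhds l)
    (hij : i ≠ j) (hjk : j ≠ k) (hik : i ≠ k) :
    diagonalLame (cyclidicH P p) i j k l = cyclidicH P p i l * cyclidicH P p j l / 4 *
      (e₀ - p ^ 2 * e₃ + p * e₄ * (cyclidicW p l / √(∏ m, l m) * (1 / l i + 1 / l j)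
        + p * (1 / l i + 1 / l j + 1 / l k))) := by
  have hmem := mem_of_mem_nhds hl
  have hne := apply_ne_zero_of_mem_cyclidicDomain hmem
  have hsub {m n} (hmn : m ≠ n) := sub_ne_zero_of_mem_cyclidicDomain (i := m) (j := n) hmem hmn
  have hW := cyclidicW_ne_zero hmem
  have hS : √(∏ m, l m) ≠ 0 := (Real.sqrt_pos.2 hmem.1).ne'
  have hprod : l i * l j * l k = √(∏ m, l m) ^ 2 := by
    rw [Real.sq_sqrt hmem.1.le, prod_univ_eq_mul_mul hij hjk hik]
  have hWQ := cyclidicW_mul_cyclidicQ hmem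
  have hquartic : cyclidicW p l ^ 2 * (1 - cyclidicQ p l) ^ 2 = 1 := by
    rw [cyclidicQ, sub_sub_cancel, ← mul_pow, mul_inv_cancel₀ hW, one_pow]
  have hlinear : cyclidicW p l ^ 2 * (cyclidicQ p l ^ 2 / √(∏ m, l m) ^ 2) = p ^ 2 := by
    rw [← mul_div_assoc, ← mul_pow, hWQ, mul_pow, mul_div_cancel_right₀ _ (pow_ne_zero 2 hS)]
  have hconst : cyclidicW p l ^ 2 * (cyclidicQ p l / √(∏ m, l m) ^ 2) =
      p * (cyclidicW p l / √(∏ m, l m)) := by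
    field_simp
    linear_combination hWQ
  rw [diagonalLame_cyclidicH hl (hasDerivAt_quartic hP) hij hjk hik,
    diagonalForm_quartic (hne i) (hne j) (hne k) (hsub hij) (hsub hik) (hsub hjk) _ hP, hprod]
  linear_combination cyclidicH P p i l * cyclidicH P p j l / 4 *
    (e₀ * hquartic - e₃ * hlinear
      + e₄ * ((1 / l i + 1 / l j) * hconst + (1 / l i + 1 / l j + 1 / l k) * hlinear))

lemma quartic_eq_of_diagonalLame_eq_zero (hl : cyclidicDomain P p ∈ nhds l)
    (hij : i ≠ j) (hjk : j ≠ k) (hik : i ≠ k) (hzero : diagonalLame (cyclidicH P p) i j k l = 0)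
    (hzero' : diagonalLame (cyclidicH P p) i k j l = 0) :
    p * e₄ = 0 ∧ p ^ 2 * e₃ = e₀ := by
  have hmem := mem_of_mem_nhds hl
  have hH (m) : cyclidicH P p m l ≠ 0 := (cyclidicH_pos hmem m).ne'
  rw [diagonalLame_cyclidicH_quartic hP hl hij hjk hik] at hzero
  rw [diagonalLame_cyclidicH_quartic hP hl hik hjk.symm hij] at hzero'
  simp only [mul_eq_zero, div_eq_zero_iff, hH, OfNat.ofNat_ne_zero, or_self, false_or]
    at hzero hzero'
  have hasymm : cyclidicW p l / √(∏ m, l m) * (1 / l j - 1 / l k) ≠ 0 := by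
    refine mul_ne_zero (div_ne_zero (cyclidicW_ne_zero hmem) (Real.sqrt_pos.2 hmem.1).ne') ?_
    have hne := apply_ne_zero_of_mem_cyclidicDomain hmem
    rw [div_sub_div _ _ (hne j) (hne k), one_mul, mul_one]
    exact div_ne_zero (sub_ne_zero_of_mem_cyclidicDomain hmem hjk.symm)
      (mul_ne_zero (hne j) (hne k))
  have hdiff : p * e₄ * (cyclidicW p l / √(∏ m, l m) * (1 / l j - 1 / l k)) = 0 := by
    linear_combination hzero - hzero'
  have hconst : p * e₄ = 0 := (mul_eq_zero.1 hdiff).resolve_right hasymm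
  rw [hconst, zero_mul, add_zero] at hzero
  exact ⟨hconst, (sub_eq_zero.1 hzero).symm⟩

end Quartic

theorem cyclidic_lame_equations_general {e₀ e₁ e₂ e₃ e₄ : ℝ}
    (hP : ∀ x, P x = e₀ * x ^ 4 - e₁ * x ^ 3 + e₂ * x ^ 2 - e₃ * x + e₄)
    {U : Set (Fin 3 → ℝ)} (hUo : IsOpen U) (hUne : U.Nonempty) (hU : U ⊆ cyclidicDomain P p) :
    (∀ i j k : Fin 3, i ≠ j → j ≠ k → i ≠ k → ∀ l ∈ U,
        offDiagonalLame (cyclidicH P p) i j k l = 0) ∧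
    ((∀ i j k : Fin 3, i ≠ j → j ≠ k → i ≠ k → ∀ l ∈ U,
        diagonalLame (cyclidicH P p) i j k l = 0) ↔
      p * e₄ = 0 ∧ p ^ 2 * e₃ = e₀) := by
  have hnhds {l} (hl : l ∈ U) : cyclidicDomain P p ∈ nhds l :=
    Filter.mem_of_superset (hUo.mem_nhds hl) hU
  refine ⟨fun i j k hij hjk hik l hl ↦ offDiagonalLame_cyclidicH (hnhds hl) hij hjk hik,
    fun h ↦ ?_, ?_⟩
  · obtain ⟨l, hl⟩ := hUne
    exact quartic_eq_of_diagonalLame_eq_zero (i := 0) (j := 1) (k := 2) hP (hnhds hl)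
      (by decide) (by decide) (by decide)
      (h 0 1 2 (by decide) (by decide) (by decide) l hl)
      (h 0 2 1 (by decide) (by decide) (by decide) l hl)
  · rintro ⟨hconst, hlin⟩ i j k hij hjk hik l hl
    rw [diagonalLame_cyclidicH_quartic hP (hnhds hl) hij hjk hik, hconst, hlin, sub_self,
      zero_mul, add_zero, mul_zero]

end CyclidicMetric

/-- **Lamé equations for Darboux's cyclidic metric (Proposition 3).** With
`P(x) = (x-a)(x-b)(x-c)(x-d)`, `W = 1 + p√(λ¹λ²λ³)` and
`Hᵢ² = W⁻² ∏_{j≠i}(λⁱ-λʲ)/P(λⁱ)` (positive on the nonempty open set `U`, with `Hᵢ` the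
positive square roots): (1) the off-diagonal Lamé equations hold on `U` for every
permutation `(i,j,k)` of `(1,2,3)`; (2) the diagonal Lamé equations hold on `U` for
every permutation if and only if `p·abcd = 0` and `p²(abc+abd+acd+bcd) = 1`. -/
theorem cyclidic_lame_equations (a b c d p : ℝ)
    (P : ℝ → ℝ) (hP : ∀ x, P x = (x - a) * (x - b) * (x - c) * (x - d))
    (U : Set (Fin 3 → ℝ)) (hUo : IsOpen U) (hUne : U.Nonempty)
    (hord : ∀ l ∈ U, 0 < l 2 ∧ l 2 < l 1 ∧ l 1 < l 0)
    (W : (Fin 3 → ℝ) → ℝ) (hW : ∀ l, W l = 1 + p * Real.sqrt (l 0 * l 1 * l 2))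
    (hWpos : ∀ l ∈ U, 0 < W l)
    (H2 : Fin 3 → (Fin 3 → ℝ) → ℝ)
    (hH2 : ∀ i l,
      H2 i l = (W l ^ 2)⁻¹ * (∏ j ∈ Finset.univ.erase i, (l i - l j)) / P (l i))
    (hH2pos : ∀ i, ∀ l ∈ U, 0 < H2 i l)
    (H : Fin 3 → (Fin 3 → ℝ) → ℝ) (hH : ∀ i l, H i l = Real.sqrt (H2 i l)) :
    (∀ i j k : Fin 3, i ≠ j → j ≠ k → i ≠ k → ∀ l ∈ U,
        pd j (pd k (H i)) l - (H j l)⁻¹ * pd j (H i) l * pd k (H j) l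
          - (H k l)⁻¹ * pd k (H i) l * pd j (H k) l = 0) ∧
    ((∀ i j k : Fin 3, i ≠ j → j ≠ k → i ≠ k → ∀ l ∈ U,
        pd i (fun w => (H i w)⁻¹ * pd i (H j) w) l
          + pd j (fun w => (H j w)⁻¹ * pd j (H i) w) l
          + (H k l ^ 2)⁻¹ * pd k (H i) l * pd k (H j) l = 0) ↔
      (p * (a * b * c * d) = 0 ∧
        p ^ 2 * (a * b * c + a * b * d + a * c * d + b * c * d) = 1)) := by
  have hWp : W = cyclidicW p := funext fun l ↦ by rw [hW, cyclidicW, Fin.prod_univ_three]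
  obtain rfl : H2 = cyclidicSq P p := by
    ext i l
    rw [hH2, hWp, cyclidicSq]
  obtain rfl : H = cyclidicH P p := funext₂ hH
  have hquartic (x : ℝ) : P x = 1 * x ^ 4 - (a + b + c + d) * x ^ 3
      + (a * b + a * c + a * d + b * c + b * d + c * d) * x ^ 2
      - (a * b * c + a * b * d + a * c * d + b * c * d) * x + a * b * c * d := by
    rw [hP]
    ring
  refine cyclidic_lame_equations_general hquartic hUo hUne fun l hl ↦ ⟨?_, (hH2pos · l hl)⟩
  obtain ⟨h₂, h₂₁, h₁₀⟩ := hord l hl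
  rw [Fin.prod_univ_three]
  exact mul_pos (mul_pos ((h₂.trans h₂₁).trans h₁₀) (h₂.trans h₂₁)) h₂
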